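/- Let β ≥ 0, let f : ℝ≥0 → ℝ≥0 be strictly increasing with f(0) = 0, and let n, s be naturals with 1 ≤ s ≤ n−4. If T(n,s) < β, then m ↦ Q(n,m,s) is strictly decreasing on the real interval [0,(n−s)/2], so Q(n,·,s) is minimized at m = (n−s)/2; if T(n,s) > β, then m ↦ Q(n,m,s) is strictly increasing on [0,(n−s)/2], so Q(n,·,s) is minimized at m = 0; and if T(n,s) = β, then Q(n,·,s) is constant. -/

import Mathlib

open scoped NNReal

noncomputable section

/-- T(n,s) = (n−s−3)·f(n−s−1) − (n−s−2)·f(n−s−2). -/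
def Tval (f : ℝ≥0 → ℝ≥0) (n s : ℕ) : ℝ :=
  ((n : ℝ) - s - 3) * ((f ((n - s - 1 : ℕ) : ℝ≥0) : ℝ≥0) : ℝ)
    - ((n : ℝ) - s - 2) * ((f ((n - s - 2 : ℕ) : ℝ≥0) : ℝ≥0) : ℝ)

/-- D₁ = f(n−s−1)+β. -/
def D1val (β : ℝ) (f : ℝ≥0 → ℝ≥0) (n s : ℕ) : ℝ :=
  ((f ((n - s - 1 : ℕ) : ℝ≥0) : ℝ≥0) : ℝ) + β

/-- D₂ = f(n−s−2)+β. -/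
def D2val (β : ℝ) (f : ℝ≥0 → ℝ≥0) (n s : ℕ) : ℝ :=
  ((f ((n - s - 2 : ℕ) : ℝ≥0) : ℝ≥0) : ℝ) + β

/-- A(n,m,s), with `m` a real variable. -/
def Aval (β : ℝ) (f : ℝ≥0 → ℝ≥0) (n : ℕ) (m : ℝ) (s : ℕ) : ℝ :=
  (D1val β f n s * D2val β f n s / (3 * D1val β f n s - 2 * D2val β f n s)) *
      (3 * (β - Tval f n s) /
          (m * (3 * D1val β f n s - 2 * D2val β f n s) + ((n : ℝ) - s) * D2val β f n s) - 1)
    + β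

/-- B(s) = β/s − ((s−1)/s)·f(1). -/
def Bval (β : ℝ) (f : ℝ≥0 → ℝ≥0) (s : ℕ) : ℝ :=
  β / (s : ℝ) - (((s : ℝ) - 1) / (s : ℝ)) * ((f 1 : ℝ≥0) : ℝ)

/-- Q(n,m,s). -/
def Qval (β : ℝ) (f : ℝ≥0 → ℝ≥0) (n : ℕ) (m : ℝ) (s : ℕ) : ℝ :=
  if Aval β f n m s > -((f 1 : ℝ≥0) : ℝ) then
    (Aval β f n m s * Bval β f s - ((f 1 : ℝ≥0) : ℝ) * ((f ((n - s : ℕ) : ℝ≥0) : ℝ≥0) : ℝ)) /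
      (Aval β f n m s + Bval β f s + ((f 1 : ℝ≥0) : ℝ) + ((f ((n - s : ℕ) : ℝ≥0) : ℝ≥0) : ℝ))
  else Aval β f n m s

/-!
Write `c = f(1)` and `F = f(n−s)`. On the branch `A > −c`,
`Q + c = (A + c)(B + c) / ((A + c) + (B + F))`, which vanishes at `A = −c`. So the two branches of
`Q` fit together continuously, and since `B + c` and `B + F` are positive, `Q` is a strictly
increasing function of `A`. As a function of `m ≥ 0`, `A = (β − T) · w(m) + const` with `w` strictly
decreasing, so the sign of `β − T` decides everything.
-/

section OrderedField

variable {𝕜 : Type*} [Field 𝕜] [LinearOrder 𝕜] {a b c e k B F : 𝕜}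

/-- `Q` as a function of the value `x` of `A`, for given `B`, `c = f(1)` and `F = f(n−s)`. -/
def outerVal (B c F x : 𝕜) : 𝕜 :=
  if x > -c then (x * B - c * F) / (x + B + c + F) else x

theorem outerVal_of_le {x : 𝕜} (hx : x ≤ -c) : outerVal B c F x = x :=
  if_neg hx.not_gt

variable [IsStrictOrderedRing 𝕜]

theorem strictMonoOn_mul_div_add (ha : 0 < a) (hb : 0 < b) :
    StrictMonoOn (fun y : 𝕜 ↦ y * b / (y + a)) (Set.Ici 0) := by
  intro x hx y hy hxy
  rw [Set.mem_Ici] at hx hy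
  have hcross : y * b * (x + a) - x * b * (y + a) = a * b * (y - x) := by ring
  refine (div_lt_div_iff₀ (by positivity) (by positivity)).2 (sub_pos.1 ?_)
  rw [hcross]
  exact mul_pos (mul_pos ha hb) (sub_pos.2 hxy)

theorem strictAntiOn_div_mul_add (ha : 0 < a) (he : 0 < e) :
    StrictAntiOn (fun m : 𝕜 ↦ a / (m * e + k)) {m | 0 < m * e + k} :=
  fun _ hx _ _ hxy ↦ div_lt_div_of_pos_left ha hx (by gcongr)

theorem outerVal_of_ge (hBF : 0 < B + F) {x : 𝕜} (hx : -c ≤ x) :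
    outerVal B c F x = (x + c) * (B + c) / (x + c + (B + F)) - c := by
  rcases hx.eq_or_lt with rfl | hx
  · simp [outerVal]
  · have hden : x + B + c + F = x + c + (B + F) := by ring
    have hpos : 0 < x + c + (B + F) := by linarith
    rw [outerVal, if_pos hx, hden, eq_sub_iff_add_eq, div_add' _ _ _ hpos.ne']
    ring

theorem outerVal_strictMono (hBc : 0 < B + c) (hBF : 0 < B + F) : StrictMono (outerVal B c F) := by
  have hlow : StrictMonoOn (outerVal B c F) (Set.Iic (-c)) :=
    strictMonoOn_id.congr fun _ hx ↦ (outerVal_of_le hx).symm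
  have hhigh : StrictMonoOn (outerVal B c F) (Set.Ici (-c)) := by
    intro x hx y hy hxy
    rw [outerVal_of_ge hBF hx, outerVal_of_ge hBF hy]
    exact sub_lt_sub_right (strictMonoOn_mul_div_add hBF hBc (neg_le_iff_add_nonneg.1 hx)
      (neg_le_iff_add_nonneg.1 hy) (add_lt_add_left hxy c)) c
  exact hlow.Iic_union_Ici hhigh

end OrderedField

section Parameters

variable {β : ℝ} {f : ℝ≥0 → ℝ≥0} {n s : ℕ}

theorem D2val_pos (hf : Monotone f) (hβ : -(f 1 : ℝ) < β) (hns : s + 3 ≤ n) :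
    0 < D2val β f n s := by
  have hle : (f 1 : ℝ) ≤ f (n - s - 2 : ℕ) :=
    mod_cast hf (Nat.one_le_cast.2 (by omega : 1 ≤ n - s - 2))
  unfold D2val
  linarith

theorem D2val_lt_D1val (hf : StrictMono f) (hns : s + 2 ≤ n) : D2val β f n s < D1val β f n s := by
  have hlt : f (n - s - 2 : ℕ) < f (n - s - 1 : ℕ) :=
    hf (Nat.cast_lt.2 (by omega))
  exact add_lt_add_left (NNReal.coe_lt_coe.2 hlt) β

theorem Bval_add_f_one (hs : s ≠ 0) : Bval β f s + f 1 = (β + f 1) / s := by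
  unfold Bval
  field_simp
  ring

theorem Bval_add_f_one_pos (hβ : -(f 1 : ℝ) < β) (hs : s ≠ 0) : 0 < Bval β f s + f 1 := by
  rw [Bval_add_f_one hs]
  exact div_pos (neg_lt_iff_pos_add.1 hβ) (by positivity)

theorem Bval_add_f_pos (hf : Monotone f) (hβ : -(f 1 : ℝ) < β) (hs : s ≠ 0) (hns : s < n) :
    0 < Bval β f s + f (n - s : ℕ) := by
  have hle : f 1 ≤ f (n - s : ℕ) := hf (Nat.one_le_cast.2 (by omega))
  exact (Bval_add_f_one_pos hβ hs).trans_le (add_le_add_right (NNReal.coe_le_coe.2 hle) _)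

theorem Qval_eq_outerVal (m : ℝ) :
    Qval β f n m s = outerVal (Bval β f s) (f 1) (f (n - s : ℕ)) (Aval β f n m s) :=
  rfl

theorem outerVal_Bval_strictMono (hf : Monotone f) (hβ : -(f 1 : ℝ) < β) (hs : s ≠ 0)
    (hns : s < n) : StrictMono (outerVal (Bval β f s) (f 1) (f (n - s : ℕ))) :=
  outerVal_strictMono (Bval_add_f_one_pos hβ hs) (Bval_add_f_pos hf hβ hs hns)

variable (β f n s) in
/-- `D₁D₂ / (3D₁ − 2D₂)`, the leading factor of `A`. -/
def leadingFactor : ℝ :=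
  D1val β f n s * D2val β f n s / (3 * D1val β f n s - 2 * D2val β f n s)

variable (β f n s) in
/-- The coefficient `w(m)` of `β − T(n,s)` in `A(n,m,s)`, which carries all the dependence of `A` on
`m`. -/
def excessWeight (m : ℝ) : ℝ :=
  3 * leadingFactor β f n s /
    (m * (3 * D1val β f n s - 2 * D2val β f n s) + ((n : ℝ) - s) * D2val β f n s)

theorem Aval_eq_excessWeight (m : ℝ) :
    Aval β f n m s =
      (β - Tval f n s) * excessWeight β f n s m + (β - leadingFactor β f n s) := by
  unfold Aval excessWeight leadingFactor
  ring

theorem excessWeight_strictAntiOn (hf : StrictMono f) (hβ : -(f 1 : ℝ) < β) (hns : s + 3 ≤ n) :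
    StrictAntiOn (excessWeight β f n s) (Set.Ici 0) := by
  have hD₂ : 0 < D2val β f n s := D2val_pos hf.monotone hβ hns
  have hD₁ : D2val β f n s < D1val β f n s := D2val_lt_D1val hf (by omega)
  have hE : 0 < 3 * D1val β f n s - 2 * D2val β f n s := by linarith
  have hP : 0 < leadingFactor β f n s := div_pos (mul_pos (hD₂.trans hD₁) hD₂) hE
  have hns' : (0 : ℝ) < n - s := sub_pos.2 (Nat.cast_lt.2 (by omega))
  refine (strictAntiOn_div_mul_add (by positivity) hE).mono fun m hm ↦ ?_
  exact add_pos_of_nonneg_of_pos (mul_nonneg hm hE.le) (mul_pos hns' hD₂)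

theorem Aval_strictAntiOn (hf : StrictMono f) (hβ : -(f 1 : ℝ) < β) (hns : s + 3 ≤ n)
    (hT : Tval f n s < β) : StrictAntiOn (fun m ↦ Aval β f n m s) (Set.Ici 0) := by
  intro x hx y hy hxy
  simp only [Aval_eq_excessWeight]
  have hw := excessWeight_strictAntiOn hf hβ hns hx hy hxy
  exact add_lt_add_left (mul_lt_mul_of_pos_left hw (sub_pos.2 hT)) _

theorem Aval_strictMonoOn (hf : StrictMono f) (hβ : -(f 1 : ℝ) < β) (hns : s + 3 ≤ n)
    (hT : β < Tval f n s) : StrictMonoOn (fun m ↦ Aval β f n m s) (Set.Ici 0) := by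
  intro x hx y hy hxy
  simp only [Aval_eq_excessWeight]
  have hw := excessWeight_strictAntiOn hf hβ hns hx hy hxy
  exact add_lt_add_left (mul_lt_mul_of_neg_left hw (sub_neg.2 hT)) _

theorem Aval_of_Tval_eq (hT : Tval f n s = β) (m : ℝ) :
    Aval β f n m s = β - leadingFactor β f n s := by
  rw [Aval_eq_excessWeight, hT, sub_self, zero_mul, zero_add]

end Parameters

theorem stmt10_general (β : ℝ) (f : ℝ≥0 → ℝ≥0) (hf : StrictMono f) (hβ : -(f 1 : ℝ) < β)
    (n s : ℕ) (hs1 : 1 ≤ s) (hns : s + 3 ≤ n) :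
    (Tval f n s < β → StrictAntiOn (fun m : ℝ ↦ Qval β f n m s) (Set.Ici 0)) ∧
    (Tval f n s > β → StrictMonoOn (fun m : ℝ ↦ Qval β f n m s) (Set.Ici 0)) ∧
    (Tval f n s = β → ∀ m₁ ∈ Set.Ici (0 : ℝ), ∀ m₂ ∈ Set.Ici (0 : ℝ),
      Qval β f n m₁ s = Qval β f n m₂ s) := by
  have hQ := outerVal_Bval_strictMono (n := n) hf.monotone hβ (by omega : s ≠ 0) (by omega)
  simp only [Qval_eq_outerVal]
  refine ⟨fun hT ↦ ?_, fun hT ↦ ?_, fun hT m₁ _ m₂ _ ↦ ?_⟩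
  · exact hQ.comp_strictAntiOn (Aval_strictAntiOn hf hβ hns hT)
  · exact hQ.comp_strictMonoOn (Aval_strictMonoOn hf hβ hns hT)
  · rw [Aval_of_Tval_eq hT, Aval_of_Tval_eq hT]

theorem stmt10 (β : ℝ) (hβ : 0 ≤ β)
    (f : ℝ≥0 → ℝ≥0) (hf : StrictMono f) (hf0 : f 0 = 0)
    (n s : ℕ) (hs1 : 1 ≤ s) (hns : s + 4 ≤ n) :
    (Tval f n s < β →
      StrictAntiOn (fun m : ℝ => Qval β f n m s) (Set.Icc 0 (((n : ℝ) - s) / 2)) ∧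
      ∀ m ∈ Set.Icc (0 : ℝ) (((n : ℝ) - s) / 2),
        Qval β f n (((n : ℝ) - s) / 2) s ≤ Qval β f n m s) ∧
    (Tval f n s > β →
      StrictMonoOn (fun m : ℝ => Qval β f n m s) (Set.Icc 0 (((n : ℝ) - s) / 2)) ∧
      ∀ m ∈ Set.Icc (0 : ℝ) (((n : ℝ) - s) / 2),
        Qval β f n 0 s ≤ Qval β f n m s) ∧
    (Tval f n s = β →
      ∀ m₁ ∈ Set.Icc (0 : ℝ) (((n : ℝ) - s) / 2), ∀ m₂ ∈ Set.Icc (0 : ℝ) (((n : ℝ) - s) / 2),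
        Qval β f n m₁ s = Qval β f n m₂ s) := by
  have hf1 : (0 : ℝ) < f 1 := NNReal.coe_pos.2 (hf zero_lt_one).pos
  obtain ⟨hanti, hmono, hconst⟩ := stmt10_general β f hf (by linarith) n s hs1 (by omega)
  exact ⟨fun hT ↦ ⟨(hanti hT).mono Set.Icc_subset_Ici_self, fun _ hm ↦
      (hanti hT).antitoneOn hm.1 (hm.1.trans hm.2) hm.2⟩,
    fun hT ↦ ⟨(hmono hT).mono Set.Icc_subset_Ici_self, fun _ hm ↦
      (hmono hT).monotoneOn Set.self_mem_Ici hm.1 hm.1⟩,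
    fun hT m₁ h₁ m₂ h₂ ↦ hconst hT m₁ h₁.1 m₂ h₂.1⟩
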